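/- arXiv:math/0409264 — 2 statements merged into one kernel-verified Lean document; each statement's English description precedes it below -/
import Mathlib

section
/- Let P be an n×n row-stochastic real matrix with a state symmetry σ, let v be a probability vector (nonnegative entries summing to 1) on the same index set, and let Q be the lumped matrix on ⟨σ⟩-orbits defined by Q (orbit of i) O = ∑_{j ∈ O} P i j (which is well defined). Then the aggregated process of the Markov chain with transition matrix P and start vector v is governed by Q: for every n ∈ ℕ and every ⟨σ⟩-orbit O, ∑_{j ∈ O} (vᵀ Pⁿ) j = (wᵀ Qⁿ) O, where w is the vector on orbits given by w O = ∑_{j ∈ O} v j. -/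
open scoped Classical
open Matrix

/-!
Let `L` be the 0/1 matrix recording which class each state belongs to. Aggregating a row vector over
the classes is multiplication by `L` on the right, so `wᵀ = vᵀ L`, and `Q` being the lumped matrix
of `P` means exactly that `P L = L Q`. Hence `Pᴺ L = L Qᴺ`, and `vᵀ Pᴺ L = vᵀ L Qᴺ = wᵀ Qᴺ`.
-/

section LumpingMatrix

variable {R α β γ : Type*} [Semiring R] [DecidableEq β]

variable (R) in
/-- The membership matrix of the lumping `f : α → β` of the states `α` into the classes `β`. It
turns aggregation over classes into matrix multiplication. Classes are encoded as values of `f`, so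
that a class `b` outside the range of `f` is empty. -/
def lumpingMatrix (f : α → β) : Matrix α β R :=
  Matrix.of fun i b ↦ if f i = b then 1 else 0

theorem lumpingMatrix_mul_apply [Fintype β] (f : α → β) (M : Matrix β γ R) (i : α) (c : γ) :
    (lumpingMatrix R f * M) i c = M (f i) c := by
  simp [lumpingMatrix, Matrix.mul_apply]

theorem vecMul_lumpingMatrix_apply [Fintype α] (f : α → β) (v : α → R) (b : β) :
    (v ᵥ* lumpingMatrix R f) b = ∑ j with f j = b, v j := by
  simp [lumpingMatrix, Matrix.vecMul, dotProduct, Finset.sum_filter]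

theorem mul_lumpingMatrix_eq_lumpingMatrix_mul_iff [Fintype α] [Fintype β] {f : α → β}
    {P : Matrix α α R} {Q : Matrix β β R} :
    P * lumpingMatrix R f = lumpingMatrix R f * Q ↔
      ∀ i b, ∑ j with f j = b, P i j = Q (f i) b := by
  simp only [← Matrix.ext_iff, Matrix.mul_apply_eq_vecMul, vecMul_lumpingMatrix_apply,
    lumpingMatrix_mul_apply]

end LumpingMatrix

theorem matrix_pow_mul_eq_mul_pow {R α β : Type*} [Semiring R] [Fintype α] [DecidableEq α]
    [Fintype β] [DecidableEq β] {P : Matrix α α R} {Q : Matrix β β R} {L : Matrix α β R}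
    (h : P * L = L * Q) (N : ℕ) : P ^ N * L = L * Q ^ N := by
  induction N with
  | zero => simp
  | succ N ih =>
    calc
      P ^ (N + 1) * L = P ^ N * L * Q := by rw [pow_succ, Matrix.mul_assoc, h, Matrix.mul_assoc]
      _ = L * Q ^ (N + 1) := by rw [ih, Matrix.mul_assoc, pow_succ]

theorem mem_orbit_zpowers_iff_exists_pow_smul_eq {G X : Type*} [Group G] [MulAction G X]
    {g : G} (hg : IsOfFinOrder g) {x y : X} :
    y ∈ MulAction.orbit (Subgroup.zpowers g) x ↔ ∃ k : ℕ, g ^ k • x = y :=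
  calc
    y ∈ MulAction.orbit (Subgroup.zpowers g) x ↔ ∃ h ∈ Subgroup.zpowers g, h • x = y := by
      simp only [MulAction.mem_orbit_iff, Subtype.exists, Subgroup.mk_smul, exists_prop]
    _ ↔ ∃ h ∈ Submonoid.powers g, h • x = y := by
      simp only [hg.mem_powers_iff_mem_zpowers]
    _ ↔ ∃ k : ℕ, g ^ k • x = y := by
      simp [Submonoid.mem_powers_iff]

theorem exists_pow_smul_eq_iff_mk_orbitRel_zpowers_eq {G X : Type*} [Group G] [MulAction G X]
    {g : G} (hg : IsOfFinOrder g) {x y : X} :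
    (∃ k : ℕ, g ^ k • x = y) ↔
      Quotient.mk (MulAction.orbitRel (Subgroup.zpowers g) X) y =
        Quotient.mk (MulAction.orbitRel (Subgroup.zpowers g) X) x := by
  rw [Quotient.eq, MulAction.orbitRel_apply, mem_orbit_zpowers_iff_exists_pow_smul_eq hg]

theorem lumped_chain_governed_by_lumped_matrix_general {R α β : Type*} [Semiring R]
    [Fintype α] [DecidableEq α] [Fintype β] [DecidableEq β] (f : α → β)
    (P : Matrix α α R) (v : α → R) (Q : Matrix β β R)
    (hQ : ∀ i b, ∑ j with f j = b, P i j = Q (f i) b)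
    (w : β → R) (hw : ∀ b, w b = ∑ j with f j = b, v j) (N : ℕ) (b : β) :
    ∑ j with f j = b, (v ᵥ* P ^ N) j = (w ᵥ* Q ^ N) b := by
  have w_eq : w = v ᵥ* lumpingMatrix R f := by
    ext b
    rw [hw, vecMul_lumpingMatrix_apply]
  have intertwines : P * lumpingMatrix R f = lumpingMatrix R f * Q :=
    mul_lumpingMatrix_eq_lumpingMatrix_mul_iff.2 hQ
  calc
    ∑ j with f j = b, (v ᵥ* P ^ N) j = (v ᵥ* (P ^ N * lumpingMatrix R f)) b := by
      rw [← vecMul_lumpingMatrix_apply, Matrix.vecMul_vecMul]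
    _ = (v ᵥ* (lumpingMatrix R f * Q ^ N)) b := by
      rw [matrix_pow_mul_eq_mul_pow intertwines]
    _ = (w ᵥ* Q ^ N) b := by
      rw [w_eq, Matrix.vecMul_vecMul]

/-- Let `P` be row stochastic with state symmetry `σ`, let `v` be a
probability start vector, let `Q` be the (well-defined) lumped matrix on `⟨σ⟩`-orbits with
`Q ⟦i⟧ ⟦m⟧ = ∑_{j ∈ orbit m} P i j`, and let `w` be the lumped start vector with
`w ⟦m⟧ = ∑_{j ∈ orbit m} v j`. Then the aggregated process is governed by `Q`: for every
time `N` and every orbit, `∑_{j ∈ orbit m} (vᵀ Pᴺ) j = (wᵀ Qᴺ) ⟦m⟧`. -/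
theorem lumped_chain_governed_by_lumped_matrix
    (n : ℕ) (P : Matrix (Fin n) (Fin n) ℝ) (σ : Equiv.Perm (Fin n)) (v : Fin n → ℝ)
    (hnonneg : ∀ i j, 0 ≤ P i j) (hrow : ∀ i, ∑ j, P i j = 1)
    (hsym : ∀ i j, P (σ i) (σ j) = P i j)
    (hv0 : ∀ i, 0 ≤ v i) (hv1 : ∑ i, v i = 1)
    (Q : Matrix (Quotient (MulAction.orbitRel (↥(Subgroup.zpowers σ)) (Fin n)))
                (Quotient (MulAction.orbitRel (↥(Subgroup.zpowers σ)) (Fin n))) ℝ)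
    (hQ : ∀ i m : Fin n,
      ∑ j ∈ Finset.univ.filter (fun j => ∃ k : ℕ, (σ ^ k) m = j), P i j =
        Q (Quotient.mk (MulAction.orbitRel (↥(Subgroup.zpowers σ)) (Fin n)) i)
          (Quotient.mk (MulAction.orbitRel (↥(Subgroup.zpowers σ)) (Fin n)) m))
    (w : Quotient (MulAction.orbitRel (↥(Subgroup.zpowers σ)) (Fin n)) → ℝ)
    (hw : ∀ m : Fin n,
      w (Quotient.mk (MulAction.orbitRel (↥(Subgroup.zpowers σ)) (Fin n)) m) =
        ∑ j ∈ Finset.univ.filter (fun j => ∃ k : ℕ, (σ ^ k) m = j), v j) :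
    ∀ (N : ℕ) (m : Fin n),
      ∑ j ∈ Finset.univ.filter (fun j => ∃ k : ℕ, (σ ^ k) m = j), (v ᵥ* (P ^ N)) j =
        (w ᵥ* (Q ^ N)) (Quotient.mk (MulAction.orbitRel (↥(Subgroup.zpowers σ)) (Fin n)) m) := by
  simp only [← Equiv.Perm.smul_def,
    exists_pow_smul_eq_iff_mk_orbitRel_zpowers_eq (isOfFinOrder_of_finite σ)] at hQ hw ⊢
  exact fun N m ↦ lumped_chain_governed_by_lumped_matrix_general _ P v Q
    (fun i ↦ Quotient.ind (hQ i)) w (Quotient.ind hw) N _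
end

section
/- Let M be a 4×4 real matrix having every even permutation of {0,1,2,3} as a state symmetry. Then M has constant diagonal and constant off-diagonal entries (M i i = M j j for all i, j, and M i j = M k l whenever i ≠ j and k ≠ l), and consequently every permutation of {0,1,2,3} is a state symmetry of M. In particular, the alternating group A₄ is not the full group of state symmetries of any 4×4 real matrix (A₄ is not a group of pure matrix state symmetries). -/
/-!
A matrix is invariant under a group `G` of simultaneous row and column permutations exactly when
its entries are constant on the orbits of `G` on pairs of indices. If `G` is 2-transitive, there
are only two such orbits, the diagonal and its complement, and both are stable under the full
symmetric group. The alternating group on at least four points is 2-transitive.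
-/

open Equiv MulAction

section StateSymmetry

variable {α R : Type*}

/-- The group of state symmetries of a matrix `M`: the permutations of the indices that leave `M`
invariant when applied simultaneously to rows and columns. A permutation group is a group of pure
matrix state symmetries if it has this form. The entries may lie in any type. -/
def stateSymmetryGroup (M : Matrix α α R) : Subgroup (Perm α) where
  carrier := {σ | ∀ i j, M (σ i) (σ j) = M i j}
  one_mem' _ _ := rfl
  mul_mem' hσ hτ i j := (hσ _ _).trans (hτ i j)
  inv_mem' {σ} hσ i j := by simpa using (hσ (σ⁻¹ i) (σ⁻¹ j)).symm

variable {M : Matrix α α R} {G : Subgroup (Perm α)}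

theorem diag_eq_of_isPretransitive [IsPretransitive G α] (hG : G ≤ stateSymmetryGroup M)
    (i j : α) : M i i = M j j := by
  obtain ⟨σ, rfl⟩ := exists_smul_eq G i j
  exact (hG σ.2 i i).symm

theorem offDiag_eq_of_isMultiplyPretransitive_two [IsMultiplyPretransitive G α 2]
    (hG : G ≤ stateSymmetryGroup M) {i j k l : α} (hij : i ≠ j) (hkl : k ≠ l) :
    M i j = M k l := by
  obtain ⟨σ, rfl, rfl⟩ := is_two_pretransitive_iff.mp ‹IsMultiplyPretransitive G α 2› hij hkl
  exact (hG σ.2 i j).symm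

theorem stateSymmetryGroup_eq_top_of_isMultiplyPretransitive_two [IsMultiplyPretransitive G α 2]
    (hG : G ≤ stateSymmetryGroup M) : stateSymmetryGroup M = ⊤ := by
  have : IsPretransitive G α := isPretransitive_of_is_two_pretransitive
  refine (Subgroup.eq_top_iff' _).mpr fun σ i j => ?_
  obtain rfl | hij := eq_or_ne i j
  · exact diag_eq_of_isPretransitive hG _ _
  · exact offDiag_eq_of_isMultiplyPretransitive_two hG (σ.injective.ne hij) hij

end StateSymmetry

section AlternatingGroup

variable {α : Type*} [Fintype α] [DecidableEq α]

theorem alternatingGroup_isMultiplyPretransitive_two (hα : 4 ≤ Nat.card α) :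
    IsMultiplyPretransitive (alternatingGroup α) α 2 :=
  have := alternatingGroup.isMultiplyPretransitive α
  isMultiplyPretransitive_of_le (n := Nat.card α - 2) (by lia) (Nat.sub_le _ _)

theorem alternatingGroup_ne_top [Nontrivial α] : alternatingGroup α ≠ ⊤ := by
  intro h
  simpa [h] using alternatingGroup.index_eq_two (α := α)

theorem alternatingGroup_four_not_pure_matrix_state_symmetries_general {R : Type*}
    (hα : 4 ≤ Nat.card α) :
    (∀ M : Matrix α α R,
      (∀ σ ∈ alternatingGroup α, ∀ i j, M (σ i) (σ j) = M i j) →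
        (∀ i j, M i i = M j j) ∧
        (∀ i j k l, i ≠ j → k ≠ l → M i j = M k l) ∧
        (∀ (σ : Perm α) (i j : α), M (σ i) (σ j) = M i j)) ∧
    ¬ ∃ M : Matrix α α R,
        {σ : Perm α | ∀ i j, M (σ i) (σ j) = M i j} = (alternatingGroup α : Set (Perm α)) := by
  have := alternatingGroup_isMultiplyPretransitive_two hα
  have : IsPretransitive (alternatingGroup α) α := isPretransitive_of_is_two_pretransitive
  have : Nontrivial α := Finite.one_lt_card_iff_nontrivial.mp (by lia)
  refine ⟨fun M hM => ⟨diag_eq_of_isPretransitive hM,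
    fun _ _ _ _ => offDiag_eq_of_isMultiplyPretransitive_two hM,
    (Subgroup.eq_top_iff' _).mp (stateSymmetryGroup_eq_top_of_isMultiplyPretransitive_two hM)⟩, ?_⟩
  rintro ⟨M, hM⟩
  have hA : stateSymmetryGroup M = alternatingGroup α := SetLike.coe_injective hM
  exact alternatingGroup_ne_top
    (hA.symm.trans (stateSymmetryGroup_eq_top_of_isMultiplyPretransitive_two hA.ge))

end AlternatingGroup

/-- A 4×4 real matrix having every even permutation of `{0,1,2,3}` as a
state symmetry has constant diagonal and constant off-diagonal entries, hence every
permutation of `{0,1,2,3}` is one of its state symmetries; in particular the alternating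
group `A₄` is not the full group of state symmetries of any 4×4 real matrix. -/
theorem alternatingGroup_four_not_pure_matrix_state_symmetries :
    (∀ M : Matrix (Fin 4) (Fin 4) ℝ,
      (∀ σ ∈ alternatingGroup (Fin 4), ∀ i j, M (σ i) (σ j) = M i j) →
        (∀ i j, M i i = M j j) ∧
        (∀ i j k l, i ≠ j → k ≠ l → M i j = M k l) ∧
        (∀ (σ : Equiv.Perm (Fin 4)) (i j : Fin 4), M (σ i) (σ j) = M i j)) ∧
    ¬ ∃ M : Matrix (Fin 4) (Fin 4) ℝ,
        {σ : Equiv.Perm (Fin 4) | ∀ i j, M (σ i) (σ j) = M i j} =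
          (alternatingGroup (Fin 4) : Set (Equiv.Perm (Fin 4))) :=
  alternatingGroup_four_not_pure_matrix_state_symmetries_general (by simp)
end
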